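/- arXiv:2206.06072 — 2 statements merged into one kernel-verified Lean document; each statement's English description precedes it below -/
import Mathlib

section
/- Rank drop on column submatrices is dominated by the total rank drop: let A be a real m×n matrix, B a real n×d matrix, and let 1 ≤ i_1 < i_2 < ⋯ < i_K ≤ d be a selection of column indices. Let B' denote the n×K matrix whose columns are the columns i_1,…,i_K of B, and let (AB)' denote the m×K matrix whose columns are the columns i_1,…,i_K of A·B. Then 0 ≤ Rank(B') − Rank((AB)') ≤ Rank(B) − Rank(A·B). -/
/-!
The rank drop from `B` to `A * B` is `dim (range B ⊓ ker A)`, by rank–nullity for `A` restricted to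
the column space of `B` (`rank_mul_add_finrank_inf_ker`). Selecting columns commutes with left
multiplication by `A`, so the drop on the selected columns is `dim (range B' ⊓ ker A)`, where `B'`
is the selected submatrix of `B`. Since `range B' ≤ range B`, the second drop is at most the first.
-/

open Matrix

/-- Rank–nullity for `A` restricted to the column space of `B`. -/
theorem rank_mul_add_finrank_inf_ker {m n d : ℕ}
    (A : Matrix (Fin m) (Fin n) ℝ) (B : Matrix (Fin n) (Fin d) ℝ) :
    (A * B).rank + Module.finrank ℝ ↥(LinearMap.range B.mulVecLin ⊓ LinearMap.ker A.mulVecLin)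
      = B.rank := by
  have h := (A.mulVecLin.domRestrict (LinearMap.range B.mulVecLin)).finrank_range_add_finrank_ker
  rw [LinearMap.range_domRestrict, LinearMap.ker_domRestrict, ← LinearMap.range_comp,
    ← Matrix.mulVecLin_mul] at h
  rw [← Submodule.map_comap_subtype, Submodule.finrank_map_subtype_eq]
  exact h

/-- **Rank drop on column submatrices is dominated by the total rank drop**: for real
matrices `A : m × n`, `B : n × d` and a strictly increasing selection `idx` of `K` column
indices, writing `B' = B` restricted to the selected columns and `(AB)' = A·B` restricted
to the same columns, one has `0 ≤ Rank(B') − Rank((AB)') ≤ Rank(B) − Rank(A·B)`. -/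
theorem rank_drop_submatrix_le_rank_drop
    {m n d K : ℕ} (A : Matrix (Fin m) (Fin n) ℝ) (B : Matrix (Fin n) (Fin d) ℝ)
    (idx : Fin K → Fin d) (hidx : StrictMono idx) :
    0 ≤ ((B.submatrix id idx).rank : ℤ) - (((A * B).submatrix id idx).rank : ℤ) ∧
    ((B.submatrix id idx).rank : ℤ) - (((A * B).submatrix id idx).rank : ℤ) ≤
      (B.rank : ℤ) - ((A * B).rank : ℤ) := by
  have hAB : (A * B).submatrix id idx = A * B.submatrix id idx := by
    ext i j
    simp [Matrix.mul_apply]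
  have hB : B.submatrix id idx = B * (1 : Matrix (Fin d) (Fin d) ℝ).submatrix id idx := by
    ext i j
    simp [Matrix.mul_apply, Matrix.one_apply]
  have hle : LinearMap.range (B.submatrix id idx).mulVecLin ≤ LinearMap.range B.mulVecLin := by
    rw [hB, Matrix.mulVecLin_mul]
    exact LinearMap.range_comp_le_range _ _
  have h₁ := rank_mul_add_finrank_inf_ker A B
  have h₂ := rank_mul_add_finrank_inf_ker A (B.submatrix id idx)
  have h₃ := Submodule.finrank_mono (inf_le_inf_right (LinearMap.ker A.mulVecLin) hle)
  rw [hAB]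
  omega
end

section
/- Lyapunov exponent of the restricted spectral norm: let (A_L)_{L ≥ 1} be a sequence of linear maps from ℝⁿ to ℝᵐ (with Euclidean norms), let V ⊆ ℝⁿ be a nonzero linear subspace, and let λ ∈ ℝ. Assume A_L v ≠ 0 for every unit vector v ∈ V and every L, and that for every unit vector v ∈ V, (1/L)·log‖A_L v‖ → λ as L → ∞. Then (1/L)·log( sup over unit vectors v ∈ V of ‖A_L v‖ ) → λ as L → ∞. -/
/-!
Fix an orthonormal basis `b` of `V`, with `d = dim V ≥ 1`. A unit vector of `V` has coordinates of
absolute value at most `1` in `b`, so with `S L` the supremum of `‖A L v‖` over unit vectors,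
`‖A L (b i)‖ ≤ S L ≤ d * C` whenever `C` bounds every `‖A L (b j)‖`. After taking logarithms
and dividing by `L`, the left side tends to `lam`; on the right, `C` can be taken to be
`exp (L * c)` for any `c > lam` and large `L`, while `log d / L → 0`.
-/

open Filter

lemma norm_apply_le_of_orthonormalBasis {E F : Type*} [NormedAddCommGroup E]
    [InnerProductSpace ℝ E] [NormedAddCommGroup F] [NormedSpace ℝ F] {d : ℕ}
    (b : OrthonormalBasis (Fin d) ℝ E) (T : E →ₗ[ℝ] F) {C : ℝ} (hC : ∀ i, ‖T (b i)‖ ≤ C)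
    {v : E} (hv : ‖v‖ = 1) : ‖T v‖ ≤ d * C := by
  have hcoord : ∀ i, |inner ℝ (b i) v| ≤ 1 := fun i => by
    have h := abs_real_inner_le_norm (b i) v
    rwa [b.norm_eq_one, hv, mul_one] at h
  calc ‖T v‖ = ‖∑ i, inner ℝ (b i) v • T (b i)‖ := by
        conv_lhs => rw [← b.sum_repr' v]
        simp only [map_sum, map_smul]
    _ ≤ ∑ i : Fin d, C := norm_sum_le_of_le _ fun i _ => by
        rw [norm_smul, Real.norm_eq_abs]
        exact (mul_le_of_le_one_left (norm_nonneg _) (hcoord i)).trans (hC i)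
    _ = d * C := by simp

/-- **Lyapunov exponent of the restricted spectral norm**: if `(A_L)` is a sequence of
linear maps `ℝⁿ → ℝᵐ` (Euclidean norms), `V ⊆ ℝⁿ` is a nonzero subspace, `A_L v ≠ 0` for
every unit vector `v ∈ V` and every `L`, and `(1/L)·log ‖A_L v‖ → λ` for every unit
vector `v ∈ V`, then `(1/L)·log (sup over unit vectors v ∈ V of ‖A_L v‖) → λ`. -/
theorem lyapunov_exponent_of_restricted_sup_norm {n m : ℕ}
    (A : ℕ → (EuclideanSpace ℝ (Fin n) →ₗ[ℝ] EuclideanSpace ℝ (Fin m)))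
    (V : Submodule ℝ (EuclideanSpace ℝ (Fin n))) (hV : V ≠ ⊥) (lam : ℝ)
    (hne : ∀ L : ℕ, ∀ v ∈ V, ‖v‖ = 1 → A L v ≠ 0)
    (hlim : ∀ v ∈ V, ‖v‖ = 1 →
      Tendsto (fun L : ℕ => (1 / (L : ℝ)) * Real.log ‖A L v‖) atTop (nhds lam)) :
    Tendsto
      (fun L : ℕ => (1 / (L : ℝ)) *
        Real.log (⨆ v : {v : EuclideanSpace ℝ (Fin n) // v ∈ V ∧ ‖v‖ = 1}, ‖A L v.1‖))
      atTop (nhds lam) := by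
  let b := stdOrthonormalBasis ℝ V
  have hd : 0 < Module.finrank ℝ V :=
    Nat.pos_of_ne_zero fun h => hV (Submodule.finrank_eq_zero.mp h)
  have hbnorm : ∀ i, ‖(b i : EuclideanSpace ℝ (Fin n))‖ = 1 := fun i => b.norm_eq_one i
  have hbound : ∀ (L : ℕ) (C : ℝ),
      (∀ i, ‖A L (b i)‖ ≤ C) → ∀ v : {v : EuclideanSpace ℝ (Fin n) // v ∈ V ∧ ‖v‖ = 1},
        ‖A L v.1‖ ≤ Module.finrank ℝ V * C := fun L C hC v =>
    norm_apply_le_of_orthonormalBasis b ((A L).comp V.subtype) hC (v := ⟨v.1, v.2.1⟩) v.2.2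
  let i₀ : Fin (Module.finrank ℝ V) := ⟨0, hd⟩
  let v₀ : {v : EuclideanSpace ℝ (Fin n) // v ∈ V ∧ ‖v‖ = 1} :=
    ⟨b i₀, (b i₀).2, hbnorm i₀⟩
  have hbdd : ∀ L : ℕ, BddAbove (Set.range
      fun v : {v : EuclideanSpace ℝ (Fin n) // v ∈ V ∧ ‖v‖ = 1} => ‖A L v.1‖) := by
    intro L
    refine ⟨_, Set.forall_mem_range.2 (hbound L (∑ i, ‖A L (b i)‖) fun i => ?_)⟩
    exact Finset.single_le_sum (f := fun i => ‖A L (b i)‖) (fun _ _ => norm_nonneg _)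
      (Finset.mem_univ i)
  have hpos : ∀ L, 0 < ‖A L v₀.1‖ := fun L => norm_pos_iff.2 (hne L _ v₀.2.1 v₀.2.2)
  have hle : ∀ L, ‖A L v₀.1‖ ≤
      ⨆ v : {v : EuclideanSpace ℝ (Fin n) // v ∈ V ∧ ‖v‖ = 1}, ‖A L v.1‖ := fun L =>
    le_ciSup (hbdd L) v₀
  refine tendsto_order.2 ⟨fun a ha => ?_, fun a ha => ?_⟩
  · filter_upwards [(hlim _ v₀.2.1 v₀.2.2).eventually_const_lt ha] with L hL
    refine hL.trans_le (mul_le_mul_of_nonneg_left ?_ (by positivity))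
    exact Real.log_le_log (hpos L) (hle L)
  · obtain ⟨c, hc, hca⟩ := exists_between ha
    have hbasis : ∀ᶠ L : ℕ in atTop, ∀ i, (1 / (L : ℝ)) * Real.log ‖A L (b i)‖ < c :=
      eventually_all.2 fun i => (hlim _ (b i).2 (hbnorm i)).eventually_lt_const hc
    have hdim : ∀ᶠ L : ℕ in atTop, Real.log (Module.finrank ℝ V) / (L : ℝ) < a - c :=
      (tendsto_const_div_atTop_nhds_zero_nat _).eventually_lt_const (sub_pos.2 hca)
    filter_upwards [hbasis, hdim, eventually_gt_atTop 0] with L hL hdL hL0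
    have hL0' : (0 : ℝ) < L := Nat.cast_pos.2 hL0
    have hexp : ∀ i, ‖A L (b i)‖ ≤ Real.exp (L * c) := fun i => by
      have h := hL i
      rw [one_div, inv_mul_lt_iff₀ hL0'] at h
      exact (Real.le_exp_log _).trans (Real.exp_le_exp.2 h.le)
    have : Nonempty {v : EuclideanSpace ℝ (Fin n) // v ∈ V ∧ ‖v‖ = 1} := ⟨v₀⟩
    have hsup := ciSup_le (hbound L _ hexp)
    have hlog := Real.log_le_log ((hpos L).trans_le (hle L)) hsup
    rw [Real.log_mul (Nat.cast_pos.2 hd).ne' (Real.exp_pos _).ne', Real.log_exp] at hlog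
    rw [div_lt_iff₀ hL0'] at hdL
    rw [one_div, inv_mul_lt_iff₀ hL0']
    linarith
end
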